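/- arXiv:1405.0392 — 2 statements merged into one kernel-verified Lean document; each statement's English description precedes it below -/
import Mathlib

section
/- Under the stated hypotheses on G, the eigenvector x satisfies x_k > x_{n−1}. -/
open Matrix

/-- The signless Laplacian `Q(G) = D(G) + A(G)` of a finite simple graph `G`. -/
noncomputable def signlessLaplacian {V : Type*} [Fintype V] (G : SimpleGraph V) :
    Matrix V V ℝ :=
  letI := Classical.decEq V
  letI : DecidableRel G.Adj := Classical.decRel _
  Matrix.diagonal (fun v => (G.degree v : ℝ)) + G.adjMatrix ℝ

/-- The `Q`-index of `G`: the largest eigenvalue of the signless Laplacian `Q(G)`. -/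
noncomputable def qIndex {V : Type*} [Fintype V] (G : SimpleGraph V) : ℝ :=
  letI := Classical.decEq V
  sSup (spectrum ℝ (signlessLaplacian G))

theorem row_eq {n : ℕ} (G : SimpleGraph (Fin n)) (x : Fin n → ℝ) (q : ℝ)
    (heig : (signlessLaplacian G).mulVec x = q • x) (v : Fin n) (s : Finset (Fin n))
    (hs : G.neighborSet v = (s : Set (Fin n))) :
    q * x v = ∑ u ∈ s, (x v + x u) := by
  classical
  have h := congrFun heig v
  have hN : G.neighborFinset v = s := by
    ext u
    rw [SimpleGraph.mem_neighborFinset, ← SimpleGraph.mem_neighborSet, hs, Finset.mem_coe]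
  have h' : (G.degree v : ℝ) * x v + ∑ u ∈ G.neighborFinset v, x u = q * x v := by
    rw [Pi.smul_apply, smul_eq_mul] at h
    have hL : signlessLaplacian G =
        Matrix.diagonal (fun v => (G.degree v : ℝ)) + G.adjMatrix ℝ := by
      unfold signlessLaplacian
      congr!
    rw [← h, hL, Matrix.add_mulVec, Pi.add_apply, Matrix.mulVec_diagonal,
      SimpleGraph.adjMatrix_mulVec_apply]
  rw [← h', ← SimpleGraph.card_neighborFinset_eq_degree, hN, Finset.sum_add_distrib,
    Finset.sum_const, nsmul_eq_mul]

theorem row_le {n : ℕ} (G : SimpleGraph (Fin n)) (x : Fin n → ℝ) (q : ℝ)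
    (heig : (signlessLaplacian G).mulVec x = q • x) (hpos : ∀ i, 0 < x i)
    (v : Fin n) (s : Finset (Fin n)) (hs : ∀ u ∈ s, G.Adj v u) :
    ∑ u ∈ s, (x v + x u) ≤ q * x v := by
  classical
  rw [row_eq G x q heig v (G.neighborFinset v) (by simp)]
  apply Finset.sum_le_sum_of_subset_of_nonneg
  · intro u hu
    simpa using hs u hu
  · intro u _ _
    exact (add_pos (hpos v) (hpos u)).le

/-- for the maximal outer-planar graph of type `D_2` with `Δ = n - 3`,
the Perron eigenvector satisfies `x_k > x_{n-1}`. -/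
theorem stmt_14 (n k : ℕ) (hn : 8 ≤ n) (hk1 : 4 ≤ k) (hk2 : k ≤ n - 3)
    (G : SimpleGraph (Fin n))
    (h0 : G.neighborSet ⟨0, by omega⟩ = {⟨1, by omega⟩, ⟨n - 1, by omega⟩})
    (h1 : G.neighborSet ⟨1, by omega⟩ =
      {⟨0, by omega⟩, ⟨2, by omega⟩, ⟨3, by omega⟩, ⟨k, by omega⟩, ⟨n - 1, by omega⟩})
    (h2 : G.neighborSet ⟨2, by omega⟩ = {⟨1, by omega⟩, ⟨3, by omega⟩})
    (hlast : G.neighborSet ⟨n - 1, by omega⟩ =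
      {⟨0, by omega⟩, ⟨1, by omega⟩, ⟨k, by omega⟩, ⟨n - 2, by omega⟩})
    (hk' : G.neighborSet ⟨k, by omega⟩ =
      insert ⟨1, by omega⟩ {u : Fin n | 3 ≤ u.val ∧ u ≠ ⟨k, by omega⟩})
    (x : Fin n → ℝ) (hpos : ∀ i, 0 < x i)
    (heig : (signlessLaplacian G).mulVec x = qIndex G • x) :
    x ⟨n - 1, by omega⟩ < x ⟨k, by omega⟩ := by
  have e0 := row_eq G x _ heig ⟨0, by omega⟩ {⟨1, by omega⟩, ⟨n - 1, by omega⟩}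
    (by rw [h0]; simp)
  have el := row_eq G x _ heig ⟨n - 1, by omega⟩
    {⟨0, by omega⟩, ⟨1, by omega⟩, ⟨k, by omega⟩, ⟨n - 2, by omega⟩} (by rw [hlast]; simp)
  have a31 : G.Adj ⟨3, by omega⟩ ⟨1, by omega⟩ := by
    apply SimpleGraph.Adj.symm
    rw [← SimpleGraph.mem_neighborSet, h1]; simp
  have a32 : G.Adj ⟨3, by omega⟩ ⟨2, by omega⟩ := by
    apply SimpleGraph.Adj.symm
    rw [← SimpleGraph.mem_neighborSet, h2]; simp
  have ak : ∀ u : Fin n, 3 ≤ u.val → u.val ≠ k → G.Adj ⟨k, by omega⟩ u := by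
    intro u hu huk
    rw [← SimpleGraph.mem_neighborSet, hk']
    right
    exact ⟨hu, fun h => huk (by rw [h])⟩
  have ak1 : G.Adj ⟨k, by omega⟩ ⟨1, by omega⟩ := by
    rw [← SimpleGraph.mem_neighborSet, hk']; simp
  have b1 : 1 < n := by omega
  have b2 : 2 < n := by omega
  have b3 : 3 < n := by omega
  have bk : k < n := by omega
  have bm : n - 2 < n := by omega
  have bl : n - 1 < n := by omega
  have e3 := row_le G x _ heig hpos ⟨3, by omega⟩
    {⟨1, b1⟩, ⟨2, b2⟩, ⟨k, bk⟩} (by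
      intro u hu
      simp only [Finset.mem_insert, Finset.mem_singleton] at hu
      rcases hu with rfl | rfl | rfl
      · exact a31
      · exact a32
      · exact (ak _ (by simp) (by simp <;> omega)).symm)
  have ek := row_le G x _ heig hpos ⟨k, by omega⟩
    {⟨1, b1⟩, ⟨3, b3⟩, ⟨n - 2, bm⟩, ⟨n - 1, bl⟩} (by
      intro u hu
      simp only [Finset.mem_insert, Finset.mem_singleton] at hu
      rcases hu with rfl | rfl | rfl | rfl
      · exact ak1
      all_goals exact ak _ (by simp <;> omega) (by simp <;> omega))
  rw [Finset.sum_pair (by simp [Fin.ext_iff] <;> omega)] at e0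
  rw [Finset.sum_insert (by simp [Fin.ext_iff] <;> omega),
    Finset.sum_insert (by simp [Fin.ext_iff] <;> omega),
    Finset.sum_pair (by simp [Fin.ext_iff] <;> omega)] at el
  rw [Finset.sum_insert (by simp [Fin.ext_iff] <;> omega),
    Finset.sum_pair (by simp [Fin.ext_iff] <;> omega)] at e3
  rw [Finset.sum_insert (by simp [Fin.ext_iff] <;> omega),
    Finset.sum_insert (by simp [Fin.ext_iff] <;> omega),
    Finset.sum_pair (by simp [Fin.ext_iff] <;> omega)] at ek
  have p0 := hpos ⟨0, by omega⟩
  have p1 := hpos ⟨1, by omega⟩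
  have p2 := hpos ⟨2, by omega⟩
  have p3 := hpos ⟨3, by omega⟩
  have pk := hpos ⟨k, by omega⟩
  have pm := hpos ⟨n - 2, by omega⟩
  have pl := hpos ⟨n - 1, by omega⟩
  generalize x ⟨0, _⟩ = x0 at *
  generalize x ⟨1, _⟩ = x1 at *
  generalize x ⟨2, _⟩ = x2 at *
  generalize x ⟨3, _⟩ = x3 at *
  generalize x ⟨k, _⟩ = b at *
  generalize x ⟨n - 2, _⟩ = m at *
  generalize x ⟨n - 1, _⟩ = a at *
  generalize qIndex G = q at *
  by_contra! hD
  have hq : 4 < q := by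
    by_contra! hq
    nlinarith [mul_le_mul_of_nonneg_right hq pk.le]
  have s1 : (q - 3) * (a - b) ≤ x0 - x3 := by linarith
  have s2 : (q - 2) * (x0 - x3) < a - b := by linarith
  have s3 : (q - 2) * ((q - 3) * (a - b)) ≤ (q - 2) * (x0 - x3) :=
    mul_le_mul_of_nonneg_left s1 (by linarith)
  have s4 : (a - b) ≤ (q - 3) * (a - b) := by nlinarith
  have s5 : (q - 3) * (a - b) ≤ (q - 2) * ((q - 3) * (a - b)) := by nlinarith
  linarith
end

section
/- Under the stated hypotheses on G, if n ≥ 13 then the graph F obtained from G by deleting the edge v_1v_{n−1} and adding the edge v_0v_k satisfies q(F) > q(G). -/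
open Matrix

lemma sl_mulVec {V : Type*} [Fintype V] (G : SimpleGraph V) [DecidableRel G.Adj] (x : V → ℝ) (i : V) :
    (signlessLaplacian G *ᵥ x) i = ∑ j, if G.Adj i j then x i + x j else 0 := by
  classical
  unfold signlessLaplacian
  simp only [Matrix.add_mulVec, Pi.add_apply, Matrix.mulVec_diagonal,
    SimpleGraph.adjMatrix_mulVec_apply]
  rw [← Finset.sum_filter, Finset.sum_add_distrib, Finset.sum_const, nsmul_eq_mul]
  have e : Finset.univ.filter (G.Adj i) = G.neighborFinset i := by
    ext; simp
  rw [e, SimpleGraph.card_neighborFinset_eq_degree]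
  congr!

lemma sl_isHermitian {V : Type*} [Fintype V] (G : SimpleGraph V) :
    (signlessLaplacian G).IsHermitian := by
  classical
  unfold signlessLaplacian
  apply Matrix.IsHermitian.add
  · exact Matrix.isHermitian_diagonal _
  · rw [Matrix.IsHermitian, Matrix.conjTranspose_eq_transpose_of_trivial]
    exact SimpleGraph.transpose_adjMatrix _

lemma sl_quad {V : Type*} [Fintype V] (G : SimpleGraph V) [DecidableRel G.Adj] (x : V → ℝ) :
    2 * (x ⬝ᵥ (signlessLaplacian G *ᵥ x)) =
      ∑ i, ∑ j, if G.Adj i j then (x i + x j)^2 else 0 := by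
  have h1 : x ⬝ᵥ (signlessLaplacian G *ᵥ x) =
      ∑ i, ∑ j, if G.Adj i j then x i * (x i + x j) else 0 := by
    simp only [dotProduct, sl_mulVec, Finset.mul_sum, mul_ite, mul_zero]
  have h2 : x ⬝ᵥ (signlessLaplacian G *ᵥ x) =
      ∑ i, ∑ j, if G.Adj i j then x j * (x i + x j) else 0 := by
    rw [h1, Finset.sum_comm]
    simp only [G.adj_comm, add_comm]
  rw [two_mul]
  nth_rewrite 1 [h1]
  rw [h2, ← Finset.sum_add_distrib]
  refine Finset.sum_congr rfl fun i _ => ?_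
  rw [← Finset.sum_add_distrib]
  refine Finset.sum_congr rfl fun j _ => ?_
  split_ifs <;> ring

lemma qIndex_eq {V : Type*} [Fintype V] [DecidableEq V] (G : SimpleGraph V) :
    qIndex G = sSup (spectrum ℝ (signlessLaplacian G)) := by
  unfold qIndex
  congr!

lemma sl_psd {V : Type*} [Fintype V] [DecidableEq V] (G : SimpleGraph V) :
    (qIndex G • (1 : Matrix V V ℝ) - signlessLaplacian G).PosSemidef := by
  classical
  rw [Matrix.posSemidef_iff_isHermitian_and_spectrum_nonneg]
  constructor
  · refine Matrix.IsHermitian.sub ?_ (sl_isHermitian G)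
    simp [Matrix.IsHermitian]
  · intro a ha
    have h : qIndex G - a ∈ spectrum ℝ (signlessLaplacian G) := by
      rw [← Algebra.algebraMap_eq_smul_one, spectrum.mem_iff] at ha
      rw [spectrum.mem_iff]
      intro h
      apply ha
      rw [← IsUnit.neg_iff]
      convert h using 1
      simp only [map_sub]
      abel
    have h2 : qIndex G - a ≤ qIndex G := by
      have hf : (spectrum ℝ (signlessLaplacian G)).Finite := Matrix.finite_real_spectrum
      have := le_csSup hf.bddAbove h
      rwa [← qIndex_eq] at this
    simp only [Set.mem_ofPred_eq]
    linarith

lemma sl_rayleigh {V : Type*} [Fintype V] (G : SimpleGraph V) (x : V → ℝ) :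
    x ⬝ᵥ (signlessLaplacian G *ᵥ x) ≤ qIndex G * (x ⬝ᵥ x) := by
  classical
  have := (sl_psd G).dotProduct_mulVec_nonneg x
  simp only [Matrix.sub_mulVec, Matrix.smul_mulVec, Matrix.one_mulVec, dotProduct_sub,
    dotProduct_smul, star_trivial, smul_eq_mul] at this
  linarith

lemma sl_perron {V : Type*} [Fintype V] [Nonempty V] (G : SimpleGraph V) :
    ∃ x : V → ℝ, x ≠ 0 ∧ (∀ i, 0 ≤ x i) ∧ signlessLaplacian G *ᵥ x = qIndex G • x := by
  classical
  have hmem : qIndex G ∈ spectrum ℝ (signlessLaplacian G) := by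
    have hne : (spectrum ℝ (signlessLaplacian G)).Nonempty := by
      rw [(sl_isHermitian G).spectrum_real_eq_range_eigenvalues]
      exact Set.range_nonempty _
    have hf : (spectrum ℝ (signlessLaplacian G)).Finite := Matrix.finite_real_spectrum
    rw [qIndex_eq]
    exact hne.csSup_mem hf
  rw [← Matrix.spectrum_toLin', ← Module.End.hasEigenvalue_iff_mem_spectrum] at hmem
  obtain ⟨v, hv⟩ := hmem.exists_hasEigenvector
  have hv1 := hv.apply_eq_smul
  rw [Matrix.toLin'_apply] at hv1
  have hv0 := hv.2
  set y : V → ℝ := fun i => |v i| with hy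
  have hyy : y ⬝ᵥ y = v ⬝ᵥ v := by simp [dotProduct, hy]
  have hq : v ⬝ᵥ (signlessLaplacian G *ᵥ v) ≤ y ⬝ᵥ (signlessLaplacian G *ᵥ y) := by
    have h1 := sl_quad G v
    have h2 := sl_quad G y
    have : ∑ i, ∑ j, (if G.Adj i j then (v i + v j)^2 else 0) ≤
      ∑ i, ∑ j, (if G.Adj i j then (y i + y j)^2 else 0) := by
      refine Finset.sum_le_sum fun i _ => Finset.sum_le_sum fun j _ => ?_
      split_ifs
      · simp only [hy]
        rw [← sq_abs (v i + v j)]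
        gcongr
        exact abs_add_le _ _
      · exact le_rfl
    linarith
  rw [hv1, dotProduct_smul, smul_eq_mul, ← hyy] at hq
  refine ⟨y, ?_, fun i => abs_nonneg _, ?_⟩
  · intro h
    apply hv0
    ext i
    have := congrFun h i
    simpa [hy] using this
  · have h := (sl_psd G).dotProduct_mulVec_zero_iff y
    have hr := sl_rayleigh G y
    have h' := h.1 (by
      simp only [Matrix.sub_mulVec, Matrix.smul_mulVec, Matrix.one_mulVec, dotProduct_sub,
        dotProduct_smul, star_trivial, smul_eq_mul]
      linarith)
    simp only [Matrix.sub_mulVec, Matrix.smul_mulVec, Matrix.one_mulVec] at h'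
    exact (sub_eq_zero.1 h').symm

lemma eig_sum {V : Type*} [Fintype V] (G : SimpleGraph V) (x : V → ℝ) (q : ℝ)
    (hx : signlessLaplacian G *ᵥ x = q • x) (v : V) (S : Finset V)
    (hS : ∀ j, G.Adj v j ↔ j ∈ S) : q * x v = ∑ j ∈ S, (x v + x j) := by
  classical
  have h := congrFun hx v
  rw [sl_mulVec] at h
  simp only [hS, Pi.smul_apply, smul_eq_mul] at h
  rw [← h, ← Finset.sum_filter]
  simp

lemma eig_sum_le {V : Type*} [Fintype V] (G : SimpleGraph V) (x : V → ℝ) (q : ℝ)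
    (hx0 : ∀ i, 0 ≤ x i)
    (hx : signlessLaplacian G *ᵥ x = q • x) (v : V) (S : Finset V)
    (hS : ∀ j, G.Adj v j → j ∈ S) : q * x v ≤ ∑ j ∈ S, (x v + x j) := by
  classical
  have h := congrFun hx v
  rw [sl_mulVec] at h
  simp only [Pi.smul_apply, smul_eq_mul] at h
  rw [← h, ← Finset.sum_filter]
  refine Finset.sum_le_sum_of_subset_of_nonneg ?_ fun i _ _ => add_nonneg (hx0 _) (hx0 _)
  intro j hj
  simp only [Finset.mem_filter] at hj
  exact hS j hj.2

/-- The `Q`-index is at least the maximum degree plus one. -/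
lemma q_ge_degree {V : Type*} [Fintype V] (G : SimpleGraph V) (v : V) (S : Finset V)
    (hS : ∀ j, G.Adj v j ↔ j ∈ S) (hpos : 0 < S.card) : (S.card : ℝ) + 1 ≤ qIndex G := by
  classical
  have hvS : v ∉ S := fun h => G.loopless.irrefl v ((hS v).2 h)
  set d : ℝ := (S.card : ℝ) with hd
  have hd0 : 0 < d := by rw [hd]; exact_mod_cast hpos
  let y : V → ℝ := fun j => if j = v then d else if j ∈ S then 1 else 0
  have hyv : y v = d := by simp [y]
  have hyS : ∀ j ∈ S, y j = 1 := by
    intro j hj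
    have : j ≠ v := fun h => hvS (h ▸ hj)
    simp [y, hj, this]
  have hyo : ∀ j, j ≠ v → j ∉ S → y j = 0 := by
    intro j hj hj'
    simp [y, hj, hj']
  have hy0 : ∀ j, 0 ≤ y j := by
    intro j
    simp only [y]
    split_ifs <;> linarith
  have hyy : y ⬝ᵥ y = d * d + d := by
    unfold dotProduct
    rw [← Finset.sum_subset (Finset.subset_univ (insert v S)), Finset.sum_insert hvS, hyv,
      Finset.sum_congr rfl (fun j hj => by rw [hyS j hj])]
    · simp [hd]
    · intro j _ hj
      simp only [Finset.mem_insert, not_or] at hj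
      rw [hyo j hj.1 hj.2, mul_zero]
  have hmv : (signlessLaplacian G *ᵥ y) v = d * (d + 1) := by
    rw [sl_mulVec]
    simp only [hS]
    rw [← Finset.sum_filter, Finset.filter_univ_mem,
      Finset.sum_congr rfl (fun j hj => by rw [hyS j hj, hyv])]
    rw [Finset.sum_const, nsmul_eq_mul]
  have hmS : ∀ j ∈ S, d + 1 ≤ (signlessLaplacian G *ᵥ y) j := by
    intro j hj
    rw [sl_mulVec]
    have := Finset.single_le_sum (f := fun i => if G.Adj j i then y j + y i else 0)
      (fun i _ => by
        show 0 ≤ if G.Adj j i then y j + y i else 0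
        split_ifs
        · exact add_nonneg (hy0 _) (hy0 _)
        · exact le_rfl) (Finset.mem_univ v)
    have hadj : G.Adj j v := ((hS j).2 hj).symm
    simp only [hadj, if_true, hyv, hyS j hj] at this
    simp only [hyS j hj]
    linarith
  have hq : d * (d * (d + 1)) + d * (d + 1) ≤ y ⬝ᵥ (signlessLaplacian G *ᵥ y) := by
    unfold dotProduct
    rw [← Finset.sum_subset (Finset.subset_univ (insert v S)), Finset.sum_insert hvS, hyv, hmv]
    · have : ∑ j ∈ S, (d + 1) ≤ ∑ j ∈ S, y j * (signlessLaplacian G *ᵥ y) j :=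
        Finset.sum_le_sum fun j hj => by rw [hyS j hj, one_mul]; exact hmS j hj
      rw [Finset.sum_const, nsmul_eq_mul] at this
      linarith
    · intro j _ hj
      simp only [Finset.mem_insert, not_or] at hj
      rw [hyo j hj.1 hj.2, zero_mul]
  have hr := sl_rayleigh G y
  rw [hyy] at hr
  have hpos2 : 0 < d * d + d := by positivity
  by_contra! hlt
  nlinarith

lemma switch_sum {V : Type*} [Fintype V] (G F : SimpleGraph V) (a b c d : V)
    (hab : a ≠ b) (hcd : c ≠ d) (hGab : G.Adj a b) (hGcd : ¬ G.Adj c d)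
    (hF : ∀ i j, F.Adj i j ↔ (G.Adj i j ∧ s(i, j) ≠ s(a, b)) ∨ s(i, j) = s(c, d))
    (x : V → ℝ) :
    x ⬝ᵥ (signlessLaplacian F *ᵥ x) =
      x ⬝ᵥ (signlessLaplacian G *ᵥ x) - (x a + x b)^2 + (x c + x d)^2 := by
  classical
  have hG' := sl_quad G x
  have hF' := sl_quad F x
  have key : ∀ i j, (if F.Adj i j then (x i + x j)^2 else 0) =
      (if G.Adj i j then (x i + x j)^2 else 0)
      - (if i = a then (if j = b then (x a + x b)^2 else 0) else 0)
      - (if i = b then (if j = a then (x a + x b)^2 else 0) else 0)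
      + (if i = c then (if j = d then (x c + x d)^2 else 0) else 0)
      + (if i = d then (if j = c then (x c + x d)^2 else 0) else 0) := by
    intro i j
    rw [if_congr (hF i j) rfl rfl]
    by_cases h1 : s(i, j) = s(a, b)
    · have h2 : s(i, j) ≠ s(c, d) := by
        intro h2
        apply hGcd
        rw [← SimpleGraph.mem_edgeSet, ← h2, h1]
        exact hGab
      have h3 : G.Adj i j := by
        rw [← SimpleGraph.mem_edgeSet, h1]
        exact hGab
      simp only [ne_eq, Sym2.eq_iff] at h1 h2
      simp only [ne_eq, Sym2.eq_iff]
      rcases h1 with ⟨rfl, rfl⟩ | ⟨rfl, rfl⟩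
      · have e1 : ¬ (i = c ∧ j = d) := fun h => h2 (Or.inl h)
        have e2 : ¬ (i = d ∧ j = c) := fun h => h2 (Or.inr h)
        simp only [← ite_and]
        simp [e1, e2, h3, hab]
      · have e1 : ¬ (i = c ∧ j = d) := fun h => h2 (Or.inl h)
        have e2 : ¬ (i = d ∧ j = c) := fun h => h2 (Or.inr h)
        simp only [← ite_and]
        simp [e1, e2, h3, hab.symm, add_comm]
    · by_cases h2 : s(i, j) = s(c, d)
      · have h3 : ¬ G.Adj i j := by
          rw [← SimpleGraph.mem_edgeSet, h2]
          exact hGcd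
        simp only [Sym2.eq_iff] at h1 h2
        simp only [ne_eq, Sym2.eq_iff]
        have e1 : ¬ (i = a ∧ j = b) := fun h => h1 (Or.inl h)
        have e2 : ¬ (i = b ∧ j = a) := fun h => h1 (Or.inr h)
        rcases h2 with ⟨rfl, rfl⟩ | ⟨rfl, rfl⟩
        · simp only [← ite_and]
          simp [e1, e2, h3, hcd]
        · simp only [← ite_and]
          simp [e1, e2, h3, hcd.symm, add_comm]
      · simp only [Sym2.eq_iff] at h1 h2
        simp only [ne_eq, Sym2.eq_iff]
        have e1 : ¬ (i = a ∧ j = b) := fun h => h1 (Or.inl h)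
        have e2 : ¬ (i = b ∧ j = a) := fun h => h1 (Or.inr h)
        have e3 : ¬ (i = c ∧ j = d) := fun h => h2 (Or.inl h)
        have e4 : ¬ (i = d ∧ j = c) := fun h => h2 (Or.inr h)
        simp only [← ite_and]
        simp [e1, e2, e3, e4]
  simp only [key, Finset.sum_add_distrib, Finset.sum_sub_distrib, Finset.sum_ite_eq',
    Finset.mem_univ, if_true, Finset.sum_ite_irrel, Finset.sum_const_zero] at hF'
  linarith

/-- The linear-arithmetic core: `x₁ + x_{n-1}` is small compared to `x_k`. -/
lemma arith_core (q a b c d t m w : ℝ) (hq : 11 ≤ q)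
    (ha : 0 ≤ a) (hb : 0 ≤ b) (hc : 0 ≤ c) (hd : 0 ≤ d)
    (htw : t ≤ w) (hmw : m ≤ w)
    (e0 : (q - 2) * a = b + d) (e1 : (q - 5) * b = a + c + t + w + d)
    (e2 : (q - 2) * c = b + t) (el : (q - 4) * d = a + b + w + m) :
    20 * (b + d) ≤ 19 * w ∧ c ≤ w ∧ a ≤ w := by
  have h0 : 9 * a ≤ b + d := by nlinarith
  have h1 : 6 * b ≤ a + c + t + w + d := by nlinarith
  have h2 : 9 * c ≤ b + t := by nlinarith
  have h3 : 7 * d ≤ a + b + w + m := by nlinarith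
  refine ⟨?_, ?_, ?_⟩ <;> linarith

set_option maxHeartbeats 2000000 in
lemma main_core (n k : ℕ) (hn13 : 13 ≤ n) (hk1 : 4 ≤ k) (hk2 : k ≤ n - 3)
    (G : SimpleGraph (Fin n)) (v0 v1 v2 v3 vk vl vm : Fin n)
    (e0 : v0.val = 0) (e1 : v1.val = 1) (e2 : v2.val = 2) (e3 : v3.val = 3)
    (ek : vk.val = k) (el : vl.val = n - 1) (em : vm.val = n - 2)
    (h0 : G.neighborSet v0 = {v1, vl})
    (h1 : G.neighborSet v1 = {v0, v2, v3, vk, vl})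
    (h2 : G.neighborSet v2 = {v1, v3})
    (hl : G.neighborSet vl = {v0, v1, vk, vm})
    (hk : G.neighborSet vk = insert v1 {u : Fin n | 3 ≤ u.val ∧ u ≠ vk}) :
    qIndex G < qIndex (SimpleGraph.fromEdgeSet
        ((G.edgeSet \ {s(v1, vl)}) ∪ {s(v0, vk)})) := by
  classical
  have : Nonempty (Fin n) := ⟨v0⟩
  obtain ⟨x, hx, hx0, hE⟩ := sl_perron G
  set q := qIndex G with hqdef
  have a0 : ∀ j, G.Adj v0 j ↔ j = v1 ∨ j = vl := fun j => by
    rw [← SimpleGraph.mem_neighborSet, h0]; simp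
  have a1 : ∀ j, G.Adj v1 j ↔ j = v0 ∨ j = v2 ∨ j = v3 ∨ j = vk ∨ j = vl := fun j => by
    rw [← SimpleGraph.mem_neighborSet, h1]; simp
  have a2 : ∀ j, G.Adj v2 j ↔ j = v1 ∨ j = v3 := fun j => by
    rw [← SimpleGraph.mem_neighborSet, h2]; simp
  have al : ∀ j, G.Adj vl j ↔ j = v0 ∨ j = v1 ∨ j = vk ∨ j = vm := fun j => by
    rw [← SimpleGraph.mem_neighborSet, hl]; simp
  have ak : ∀ j, G.Adj vk j ↔ j = v1 ∨ (3 ≤ j.val ∧ j ≠ vk) := fun j => by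
    rw [← SimpleGraph.mem_neighborSet, hk]; simp
  -- eigenvalue equations
  have E0 : q * x v0 = (x v0 + x v1) + (x v0 + x vl) := by
    rw [eig_sum G x q hE v0 {v1, vl} (by simp [a0]), Finset.sum_pair]
    simp only [ne_eq, Fin.ext_iff]; omega
  have E2 : q * x v2 = (x v2 + x v1) + (x v2 + x v3) := by
    rw [eig_sum G x q hE v2 {v1, v3} (by simp [a2]), Finset.sum_pair]
    simp only [ne_eq, Fin.ext_iff]; omega
  have E1 : q * x v1 = (x v1 + x v0) + ((x v1 + x v2) + ((x v1 + x v3) +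
      ((x v1 + x vk) + (x v1 + x vl)))) := by
    rw [eig_sum G x q hE v1 {v0, v2, v3, vk, vl} (by simp [a1]), Finset.sum_insert,
      Finset.sum_insert, Finset.sum_insert, Finset.sum_pair] <;>
    simp only [ne_eq, Fin.ext_iff, Finset.mem_insert, Finset.mem_singleton] <;> omega
  have El : q * x vl = (x vl + x v0) + ((x vl + x v1) + ((x vl + x vk) + (x vl + x vm))) := by
    rw [eig_sum G x q hE vl {v0, v1, vk, vm} (by simp [al]), Finset.sum_insert,
      Finset.sum_insert, Finset.sum_pair] <;>
    simp only [ne_eq, Fin.ext_iff, Finset.mem_insert, Finset.mem_singleton] <;> omega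
  -- the tail
  set T : Finset (Fin n) := Finset.Ici v3 with hT
  have memT : ∀ j, j ∈ T ↔ 3 ≤ j.val := fun j => by
    rw [hT, Finset.mem_Ici, Fin.le_def, e3]
  have cardT : (T.card : ℝ) = n - 3 := by
    rw [hT, Fin.card_Ici, e3, Nat.cast_sub (by omega)]; norm_num
  set Sg := ∑ j ∈ T, x j with hS
  have hTsum : ∀ u ∈ T, ∑ j ∈ T.erase u, (x u + x j) = (n - 5) * x u + Sg := by
    intro u hu
    have := Finset.add_sum_erase T (fun j => x u + x j) hu
    have h2 : ∑ j ∈ T, (x u + x j) = (n - 3) * x u + Sg := by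
      rw [Finset.sum_add_distrib, Finset.sum_const, nsmul_eq_mul, cardT]
    rw [h2] at this
    linarith
  have kT : vk ∈ T := by rw [memT]; omega
  have tT : v3 ∈ T := by rw [memT]; omega
  have v1T : v1 ∉ T := by rw [memT]; omega
  have v2T : v2 ∉ T := by rw [memT]; omega
  have akS : ∀ j, G.Adj vk j ↔ j ∈ insert v1 (T.erase vk) := fun j => by
    rw [ak]; simp [memT, and_comm]
  have Ek : q * x vk = (x vk + x v1) + ((n - 5) * x vk + Sg) := by
    rw [eig_sum G x q hE vk _ akS, Finset.sum_insert (by simp [v1T]), hTsum _ kT]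
  have hqn : (n : ℝ) - 2 ≤ q := by
    have hc : (insert v1 (T.erase vk)).card = T.card := by
      rw [Finset.card_insert_of_notMem (by simp [v1T]), Finset.card_erase_of_mem kT]
      have := Finset.card_pos.2 ⟨_, kT⟩
      omega
    have := q_ge_degree G vk _ akS (by rw [hc]; exact Finset.card_pos.2 ⟨_, kT⟩)
    rw [hc, cardT] at this
    linarith
  have hn' : (13 : ℝ) ≤ n := by exact_mod_cast hn13
  have hq11 : 11 ≤ q := by linarith
  -- all middle vertices are dominated by `vk`
  have hmid : ∀ u : Fin n, 4 ≤ u.val → u.val ≤ n - 2 → x u ≤ x vk := by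
    intro u hu1 hu2
    by_cases huk : u = vk
    · rw [huk]
    have huT : u ∈ T := by rw [memT]; omega
    have hle := eig_sum_le G x q hx0 hE u (T.erase u) (by
      intro j hj
      have hne := hj.ne'
      rw [Finset.mem_erase, memT]
      refine ⟨hne, ?_⟩
      by_contra! hlt
      have hj' := hj.symm
      have : j = v0 ∨ j = v1 ∨ j = v2 := by simp only [Fin.ext_iff]; omega
      rcases this with rfl | rfl | rfl
      · rw [a0] at hj'
        simp only [Fin.ext_iff] at hj'; omega
      · rw [a1] at hj'
        simp only [Fin.ext_iff] at hj' huk; omega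
      · rw [a2] at hj'
        simp only [Fin.ext_iff] at hj'; omega)
    rw [hTsum u huT] at hle
    have := hx0 v1
    by_contra! hlt
    nlinarith [hx0 u]
  have h3 : x v3 ≤ x vk := by
    have hlT : vl ∈ T.erase v3 := by
      rw [Finset.mem_erase, memT]
      simp only [ne_eq, Fin.ext_iff]; omega
    have hle := eig_sum_le G x q hx0 hE v3 (insert v1 (insert v2 ((T.erase v3).erase vl))) (by
      intro j hj
      have hne := hj.ne'
      by_cases hj1 : j = v1
      · simp [hj1]
      by_cases hj2 : j = v2
      · simp [hj2]
      have hj' := hj.symm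
      simp only [Finset.mem_insert, Finset.mem_erase, memT, hj1, hj2, false_or]
      refine ⟨?_, hne, ?_⟩
      · rintro rfl
        rw [al] at hj'
        simp only [Fin.ext_iff] at hj'; omega
      · by_contra! hlt
        have : j = v0 := by simp only [Fin.ext_iff] at hj1 hj2 ⊢; omega
        subst this
        rw [a0] at hj'
        simp only [Fin.ext_iff] at hj'; omega)
    rw [Finset.sum_insert (by
        simp only [Finset.mem_insert, Finset.mem_erase, v1T, and_false, or_false, Fin.ext_iff]
        omega), Finset.sum_insert (by simp [v2T])] at hle
    have h4 := Finset.add_sum_erase _ (fun j => x v3 + x j) hlT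
    rw [hTsum v3 tT] at h4
    have hm := hx0 vm
    have h00 := hx0 v0
    have hll := hx0 vl
    by_contra! hlt
    have p1 : (q - 2) * (x v2 - x vl) ≤ x v3 - x vk := by nlinarith
    have p2 : (q - n + 4) * (x v3 - x vk) ≤ x v2 - x vl := by nlinarith
    have p3 : 2 * (x v3 - x vk) ≤ (q - n + 4) * (x v3 - x vk) := by
      apply mul_le_mul_of_nonneg_right <;> linarith
    have p4 : 9 * (x v2 - x vl) ≤ (q - 2) * (x v2 - x vl) := by
      apply mul_le_mul_of_nonneg_right <;> linarith
    linarith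
  have hm := hmid vm (by omega) (by omega)
  obtain ⟨r1, r2, r3⟩ := arith_core q (x v0) (x v1) (x v2) (x vl) (x v3) (x vm) (x vk) hq11
    (hx0 _) (hx0 _) (hx0 _) (hx0 _) h3 hm (by linarith) (by linarith) (by linarith) (by linarith)
  have hkpos : 0 < x vk := by
    rcases (hx0 vk).lt_or_eq with h | h
    · exact h
    exfalso
    apply hx
    ext u
    apply le_antisymm _ (hx0 u)
    show x u ≤ 0
    have b1 := hx0 v1
    have bl := hx0 vl
    have : u = v0 ∨ u = v1 ∨ u = v2 ∨ u = v3 ∨ u = vl ∨ (4 ≤ u.val ∧ u.val ≤ n - 2) := by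
      simp only [Fin.ext_iff]; omega
    rcases this with rfl | rfl | rfl | rfl | rfl | ⟨hp1, hp2⟩
    · linarith
    · linarith
    · linarith
    · linarith
    · linarith
    · linarith [hmid u hp1 hp2]
  -- compare Rayleigh quotients
  have hsw := switch_sum G (SimpleGraph.fromEdgeSet
        ((G.edgeSet \ {s(v1, vl)}) ∪ {s(v0, vk)})) v1 vl v0 vk
    (by simp only [ne_eq, Fin.ext_iff]; omega) (by simp only [ne_eq, Fin.ext_iff]; omega)
    ((a1 vl).2 (by simp)) (by rw [a0]; simp only [Fin.ext_iff]; omega)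
    (by
      intro i j
      rw [SimpleGraph.fromEdgeSet_adj]
      simp only [Set.mem_union, Set.mem_sdiff, SimpleGraph.mem_edgeSet, Set.mem_singleton_iff]
      constructor
      · exact fun h => h.1
      · intro h
        refine ⟨h, ?_⟩
        rcases h with h | h
        · exact h.1.ne
        · rintro rfl
          simp only [Sym2.eq_iff, Fin.ext_iff] at h
          omega) x
  have hr := sl_rayleigh (SimpleGraph.fromEdgeSet
        ((G.edgeSet \ {s(v1, vl)}) ∪ {s(v0, vk)})) x
  rw [hsw, hE, dotProduct_smul, smul_eq_mul] at hr
  have hxx : 0 ≤ x ⬝ᵥ x := by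
    unfold dotProduct
    exact Finset.sum_nonneg fun i _ => mul_self_nonneg _
  have hgt : (x v1 + x vl)^2 < (x v0 + x vk)^2 := by
    have b0 := hx0 v0
    have b1 := hx0 v1
    have bl := hx0 vl
    apply pow_lt_pow_left₀ <;> linarith
  by_contra! hcon
  nlinarith [mul_le_mul_of_nonneg_right hcon hxx]

/-- for the maximal outer-planar graph of type `D_2` with `Δ = n - 3`,
if `n ≥ 13` then deleting the edge `v_1 v_{n-1}` and adding the edge `v_0 v_k`
increases the `Q`-index. -/
theorem stmt_16 (n k : ℕ) (hn : 8 ≤ n) (hk1 : 4 ≤ k) (hk2 : k ≤ n - 3)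
    (G : SimpleGraph (Fin n))
    (h0 : G.neighborSet ⟨0, by omega⟩ = {⟨1, by omega⟩, ⟨n - 1, by omega⟩})
    (h1 : G.neighborSet ⟨1, by omega⟩ =
      {⟨0, by omega⟩, ⟨2, by omega⟩, ⟨3, by omega⟩, ⟨k, by omega⟩, ⟨n - 1, by omega⟩})
    (h2 : G.neighborSet ⟨2, by omega⟩ = {⟨1, by omega⟩, ⟨3, by omega⟩})
    (hlast : G.neighborSet ⟨n - 1, by omega⟩ =
      {⟨0, by omega⟩, ⟨1, by omega⟩, ⟨k, by omega⟩, ⟨n - 2, by omega⟩})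
    (hk' : G.neighborSet ⟨k, by omega⟩ =
      insert ⟨1, by omega⟩ {u : Fin n | 3 ≤ u.val ∧ u ≠ ⟨k, by omega⟩})
    (hn13 : 13 ≤ n) :
    qIndex G <
      qIndex (SimpleGraph.fromEdgeSet
        ((G.edgeSet \ {s((⟨1, by omega⟩ : Fin n), (⟨n - 1, by omega⟩ : Fin n))}) ∪
          {s((⟨0, by omega⟩ : Fin n), (⟨k, by omega⟩ : Fin n))})) := by
  exact main_core n k hn13 hk1 hk2 G _ _ _ ⟨3, by omega⟩ _ _ ⟨n - 2, by omega⟩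
    rfl rfl rfl rfl rfl rfl rfl h0 h1 h2 hlast hk'
end
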